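/- Let p be a prime, R a δ-ring, I an ideal of R containing p, and S an R-algebra which is I-adically complete and separated and I-adically étale over R. Then there exists a unique δ-structure on S making the structure homomorphism R → S a δ-homomorphism. -/

import Mathlib

/-- A δ-structure on a commutative ring `R`, relative to a prime `p`. -/
structure DeltaStructure (p : ℕ) (R : Type*) [CommRing R] where
  δ : R → R
  delta_zero : δ 0 = 0
  delta_one : δ 1 = 0
  delta_add : ∀ x y : R, δ (x + y) =
    δ x + δ y - ∑ i ∈ Finset.Ioo 0 p, ((p.choose i / p : ℕ) : R) * x ^ i * y ^ (p - i)
  delta_mul : ∀ x y : R, δ (x * y) =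
    δ x * y ^ p + x ^ p * δ y + (p : R) * δ x * δ y

universe u

/-!
By the formulas for addition and multiplication of Witt vectors of length two, a δ-structure on `A`
is the same as a ring homomorphism `A → W₂(A)` splitting the projection to `A`. So the task is to
lift `R → W₂(R) → W₂(S)` along `R → S` to a section of `W₂(S) → S`. Modulo `(IS) ^ k`, this is an
infinitesimal lifting problem: the kernel of `W₂(S / IᵏS) → S / IᵏS` is nilpotent because `p` is
nilpotent in `S / IᵏS`, and the map from `R` to `W₂(S / IᵏS)` factors over `R / Iᵏ⁺¹` because
`δ (Iᵏ⁺¹) ⊆ Iᵏ`. Étaleness of `S / Iᵏ⁺¹S` over `R / Iᵏ⁺¹` gives a unique lift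
`S → W₂(S / IᵏS)`; by uniqueness these lifts are compatible, and by completeness of `S` they
come from a unique homomorphism `S → W₂(S)`.
-/

open Ideal.Quotient (factorPow)

section WittCarry

variable {A B : Type*} [CommRing A] [CommRing B]

/-- The polynomial `((x + y) ^ p - x ^ p - y ^ p) / p` with integer coefficients: up to sign, the
carry in the addition of Witt vectors of length two, and the failure of additivity of a
δ-structure. -/
def wittCarry (p : ℕ) (x y : A) : A :=
  ∑ i ∈ Finset.Ioo 0 p, ((p.choose i / p : ℕ) : A) * x ^ i * y ^ (p - i)

lemma natCast_mul_wittCarry {p : ℕ} (hp : p.Prime) (x y : A) :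
    (p : A) * wittCarry p x y = (x + y) ^ p - x ^ p - y ^ p := by
  have h : wittCarry p x y =
      ∑ i ∈ Finset.Ioo 0 p, x ^ i * y ^ (p - i) * ((p.choose i / p : ℕ) : A) :=
    Finset.sum_congr rfl fun i _ ↦ by ring
  rw [add_pow_prime_eq' hp, h]
  ring

lemma map_wittCarry (p : ℕ) (f : A →+* B) (x y : A) :
    f (wittCarry p x y) = wittCarry p (f x) (f y) := by
  simp [wittCarry]

lemma wittCarry_mem (p : ℕ) {J : Ideal A} {x : A} (hx : x ∈ J) (y : A) : wittCarry p x y ∈ J :=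
  J.sum_mem fun _ hi ↦ J.mul_mem_right _ <| J.mul_mem_left _ <|
    J.pow_mem_of_mem hx _ (Finset.mem_Ioo.mp hi).1

end WittCarry

section WittVector

variable {p : ℕ} [hp : Fact p.Prime] {A : Type*} [CommRing A]

lemma wittVector_ghostComponent_one (x : WittVector p A) :
    WittVector.ghostComponent 1 x = p * x.coeff 1 + x.coeff 0 ^ p := by
  simp [WittVector.ghostComponent_apply, wittPolynomial_one]

/- The ghost component of index one determines `p * x.coeff 1`, which suffices over the `p`-torsion
free ring `MvPolynomial A ℤ`, of which `A` is a quotient. -/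
lemma wittVector_add_coeff_one (x y : WittVector p A) :
    (x + y).coeff 1 = x.coeff 1 + y.coeff 1 - wittCarry p (x.coeff 0) (y.coeff 0) := by
  obtain ⟨x, rfl⟩ := WittVector.map_surjective _ (MvPolynomial.counit_surjective A) x
  obtain ⟨y, rfl⟩ := WittVector.map_surjective _ (MvPolynomial.counit_surjective A) y
  simp only [← map_add, WittVector.map_coeff, ← map_wittCarry, ← map_sub]
  congr 1
  apply mul_left_cancel₀ (Nat.cast_ne_zero.mpr hp.out.ne_zero : (p : MvPolynomial A ℤ) ≠ 0)
  have ghost := map_add (WittVector.ghostComponent 1) x y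
  simp only [wittVector_ghostComponent_one, WittVector.add_coeff_zero] at ghost
  linear_combination ghost + natCast_mul_wittCarry hp.out (x.coeff 0) (y.coeff 0)

lemma wittVector_mul_coeff_one (x y : WittVector p A) :
    (x * y).coeff 1 =
      x.coeff 1 * y.coeff 0 ^ p + x.coeff 0 ^ p * y.coeff 1 + p * x.coeff 1 * y.coeff 1 := by
  obtain ⟨x, rfl⟩ := WittVector.map_surjective _ (MvPolynomial.counit_surjective A) x
  obtain ⟨y, rfl⟩ := WittVector.map_surjective _ (MvPolynomial.counit_surjective A) y
  simp only [← map_mul, WittVector.map_coeff, ← map_pow, ← map_add,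
    ← map_natCast (MvPolynomial.counit A) p]
  congr 1
  apply mul_left_cancel₀ (Nat.cast_ne_zero.mpr hp.out.ne_zero : (p : MvPolynomial A ℤ) ≠ 0)
  have ghost := map_mul (WittVector.ghostComponent 1) x y
  simp only [wittVector_ghostComponent_one, WittVector.mul_coeff_zero] at ghost
  linear_combination ghost

end WittVector

section TruncatedWittVector

lemma truncatedWittVector_ext_two {p : ℕ} {A : Type*} {x y : TruncatedWittVector p 2 A}
    (h₀ : x.coeff 0 = y.coeff 0) (h₁ : x.coeff 1 = y.coeff 1) : x = y :=
  TruncatedWittVector.ext <| Fin.forall_fin_two.mpr ⟨h₀, h₁⟩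

variable {p : ℕ} [hp : Fact p.Prime] {n : ℕ} {A B : Type*} [CommRing A] [CommRing B]

@[simp]
lemma truncatedWittVector_coeff_zero_one :
    (1 : TruncatedWittVector p (n + 1) A).coeff 0 = 1 := by
  rw [← map_one (WittVector.truncate (n + 1)), WittVector.coeff_truncate]
  exact WittVector.one_coeff_zero ..

@[simp]
lemma truncatedWittVector_coeff_one_one : (1 : TruncatedWittVector p 2 A).coeff 1 = 0 := by
  rw [← map_one (WittVector.truncate 2), WittVector.coeff_truncate]
  exact WittVector.one_coeff_eq_of_pos _ _ _ one_pos

@[simp]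
lemma truncatedWittVector_coeff_zero_add (x y : TruncatedWittVector p (n + 1) A) :
    (x + y).coeff 0 = x.coeff 0 + y.coeff 0 := by
  obtain ⟨x, rfl⟩ := WittVector.truncate_surjective p (n + 1) A x
  obtain ⟨y, rfl⟩ := WittVector.truncate_surjective p (n + 1) A y
  simp only [← map_add, WittVector.coeff_truncate]
  exact WittVector.add_coeff_zero ..

@[simp]
lemma truncatedWittVector_coeff_zero_mul (x y : TruncatedWittVector p (n + 1) A) :
    (x * y).coeff 0 = x.coeff 0 * y.coeff 0 := by
  obtain ⟨x, rfl⟩ := WittVector.truncate_surjective p (n + 1) A x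
  obtain ⟨y, rfl⟩ := WittVector.truncate_surjective p (n + 1) A y
  simp only [← map_mul, WittVector.coeff_truncate]
  exact WittVector.mul_coeff_zero ..

@[simp]
lemma truncatedWittVector_coeff_one_add (x y : TruncatedWittVector p 2 A) :
    (x + y).coeff 1 = x.coeff 1 + y.coeff 1 - wittCarry p (x.coeff 0) (y.coeff 0) := by
  obtain ⟨x, rfl⟩ := WittVector.truncate_surjective p 2 A x
  obtain ⟨y, rfl⟩ := WittVector.truncate_surjective p 2 A y
  simp only [← map_add, WittVector.coeff_truncate]
  exact wittVector_add_coeff_one x y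

@[simp]
lemma truncatedWittVector_coeff_one_mul (x y : TruncatedWittVector p 2 A) :
    (x * y).coeff 1 =
      x.coeff 1 * y.coeff 0 ^ p + x.coeff 0 ^ p * y.coeff 1 + p * x.coeff 1 * y.coeff 1 := by
  obtain ⟨x, rfl⟩ := WittVector.truncate_surjective p 2 A x
  obtain ⟨y, rfl⟩ := WittVector.truncate_surjective p 2 A y
  simp only [← map_mul, WittVector.coeff_truncate]
  exact wittVector_mul_coeff_one x y

/-- The length-`(n + 1)` analogue of `WittVector.constantCoeff`. -/
def truncatedWittVectorConstantCoeff (p n : ℕ) [Fact p.Prime] (A : Type*) [CommRing A] :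
    TruncatedWittVector p (n + 1) A →+* A where
  toFun x := x.coeff 0
  map_zero' := TruncatedWittVector.coeff_zero ..
  map_one' := truncatedWittVector_coeff_zero_one
  map_add' := truncatedWittVector_coeff_zero_add
  map_mul' := truncatedWittVector_coeff_zero_mul

@[simp]
lemma truncatedWittVectorConstantCoeff_apply (x : TruncatedWittVector p (n + 1) A) :
    truncatedWittVectorConstantCoeff p n A x = x.coeff 0 :=
  rfl

lemma truncatedWittVectorConstantCoeff_surjective :
    Function.Surjective (truncatedWittVectorConstantCoeff p n A) :=
  fun a ↦ ⟨TruncatedWittVector.mk p fun _ ↦ a, rfl⟩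

lemma truncatedWittVector_mk_map_coeff_truncate (f : A →+* B) (x : WittVector p A) :
    TruncatedWittVector.mk p (fun i ↦ f ((WittVector.truncate n x).coeff i)) =
      WittVector.truncate n (WittVector.map f x) := by
  ext i
  simp

/-- The functoriality of truncated Witt vectors, the analogue of `WittVector.map`. -/
def truncatedWittVectorMap (n : ℕ) (f : A →+* B) :
    TruncatedWittVector p n A →+* TruncatedWittVector p n B where
  toFun x := TruncatedWittVector.mk p fun i ↦ f (x.coeff i)
  map_zero' := by
    simpa only [map_zero] using truncatedWittVector_mk_map_coeff_truncate f (0 : WittVector p A)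
  map_one' := by
    simpa only [map_one] using truncatedWittVector_mk_map_coeff_truncate f (1 : WittVector p A)
  map_add' x y := by
    obtain ⟨x, rfl⟩ := WittVector.truncate_surjective p n A x
    obtain ⟨y, rfl⟩ := WittVector.truncate_surjective p n A y
    simp only [← map_add, truncatedWittVector_mk_map_coeff_truncate]
  map_mul' x y := by
    obtain ⟨x, rfl⟩ := WittVector.truncate_surjective p n A x
    obtain ⟨y, rfl⟩ := WittVector.truncate_surjective p n A y
    simp only [← map_mul, truncatedWittVector_mk_map_coeff_truncate]

lemma coeff_zero_eq_zero_and_pow_dvd_coeff_one_of_mem_ker_pow {k : ℕ}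
    {x : TruncatedWittVector p 2 A}
    (hx : x ∈ RingHom.ker (truncatedWittVectorConstantCoeff p 1 A) ^ (k + 1)) :
    x.coeff 0 = 0 ∧ (p : A) ^ k ∣ x.coeff 1 := by
  induction k generalizing x with
  | zero => simpa using hx
  | succ k ih =>
    rw [pow_succ] at hx
    induction hx using Submodule.mul_induction_on' with
    | mem_mul_mem x hx y hy =>
      obtain ⟨hx₀, hx₁⟩ := ih hx
      have hy₀ : y.coeff 0 = 0 := hy
      refine ⟨by simp [hx₀], ?_⟩
      rw [truncatedWittVector_coeff_one_mul, hx₀, hy₀, zero_pow hp.out.ne_zero, mul_zero, zero_mul,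
        zero_add, zero_add, pow_succ']
      exact (mul_dvd_mul_left _ hx₁).mul_right _
    | add x _ y _ hx hy =>
      refine ⟨by simp [hx.1, hy.1], ?_⟩
      have hcarry : wittCarry p (0 : A) 0 = 0 := wittCarry_mem p (zero_mem (⊥ : Ideal A)) 0
      rw [truncatedWittVector_coeff_one_add, hx.1, hy.1, hcarry, sub_zero]
      exact dvd_add hx.2 hy.2

lemma isNilpotent_ker_truncatedWittVectorConstantCoeff (hpA : IsNilpotent (p : A)) :
    IsNilpotent (RingHom.ker (truncatedWittVectorConstantCoeff p 1 A)) := by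
  obtain ⟨k, hk⟩ := hpA
  refine ⟨k + 1, eq_bot_iff.mpr fun x hx ↦ ?_⟩
  obtain ⟨hx₀, hx₁⟩ := coeff_zero_eq_zero_and_pow_dvd_coeff_one_of_mem_ker_pow hx
  rw [hk, zero_dvd_iff] at hx₁
  exact truncatedWittVector_ext_two (hx₀.trans (TruncatedWittVector.coeff_zero ..).symm)
    (hx₁.trans (TruncatedWittVector.coeff_zero ..).symm)

end TruncatedWittVector

namespace DeltaStructure

variable {p : ℕ} {A B : Type*} [CommRing A] [CommRing B]

lemma δ_mem_pow (D : DeltaStructure p A) (hp : p.Prime) {I : Ideal A} (hpI : (p : A) ∈ I) {k : ℕ}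
    {x : A} (hx : x ∈ I ^ (k + 1)) : D.δ x ∈ I ^ k := by
  induction k generalizing x with
  | zero => simp
  | succ k ih =>
    rw [pow_succ'] at hx
    induction hx using Submodule.mul_induction_on' with
    | mem_mul_mem x hx y hy =>
      have hδy : D.δ y ∈ I ^ k := ih hy
      rw [D.delta_mul]
      refine add_mem (add_mem ?_ ?_) ?_
      · exact Ideal.mul_mem_left _ _ (Ideal.pow_mem_of_mem _ hy _ hp.pos)
      · rw [pow_succ']
        exact Ideal.mul_mem_mul (I.pow_mem_of_mem hx _ hp.pos) hδy
      · rw [pow_succ']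
        exact Ideal.mul_mem_mul (I.mul_mem_right _ hpI) hδy
    | add x hx y _ hδx hδy =>
      rw [D.delta_add]
      have hx' : x ∈ I ^ (k + 1) := Ideal.mul_le_right hx
      exact sub_mem (add_mem hδx hδy) (wittCarry_mem p hx' y)

variable [hp : Fact p.Prime]

/-- The section `a ↦ (a, δ a)` of the projection `W₂(A) → A` attached to a δ-structure. -/
def wittSection (D : DeltaStructure p A) : A →+* TruncatedWittVector p 2 A where
  toFun a := TruncatedWittVector.mk p ![a, D.δ a]
  map_zero' := truncatedWittVector_ext_two (by simp) (by simp [D.delta_zero])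
  map_one' := truncatedWittVector_ext_two (by simp) (by simp [D.delta_one])
  map_add' x y := truncatedWittVector_ext_two (by simp) (by simp [D.delta_add, wittCarry])
  map_mul' x y := truncatedWittVector_ext_two (by simp) (by simp [D.delta_mul])

/-- The δ-structure given by the second component of a section of the projection `W₂(A) → A`. -/
noncomputable def ofWittSection (s : A →+* TruncatedWittVector p 2 A)
    (hs : (truncatedWittVectorConstantCoeff p 1 A).comp s = RingHom.id A) : DeltaStructure p A :=
  have hs₀ (a : A) : (s a).coeff 0 = a := RingHom.congr_fun hs a
  { δ := fun a ↦ (s a).coeff 1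
    delta_zero := by rw [map_zero, TruncatedWittVector.coeff_zero]
    delta_one := by rw [map_one, truncatedWittVector_coeff_one_one]
    delta_add := fun x y ↦ by
      rw [map_add, truncatedWittVector_coeff_one_add, hs₀, hs₀, wittCarry]
    delta_mul := fun x y ↦ by
      rw [map_mul, truncatedWittVector_coeff_one_mul, hs₀, hs₀] }

lemma constantCoeff_comp_wittSection (D : DeltaStructure p A) :
    (truncatedWittVectorConstantCoeff p 1 A).comp D.wittSection = RingHom.id A :=
  rfl

lemma wittSection_ofWittSection (s : A →+* TruncatedWittVector p 2 A)
    (hs : (truncatedWittVectorConstantCoeff p 1 A).comp s = RingHom.id A) :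
    (ofWittSection s hs).wittSection = s :=
  RingHom.ext fun a ↦ truncatedWittVector_ext_two (RingHom.congr_fun hs a).symm rfl

lemma wittSection_injective :
    Function.Injective (wittSection : DeltaStructure p A → A →+* TruncatedWittVector p 2 A) := by
  intro D E h
  have hδ : D.δ = E.δ := funext fun a ↦
    congrArg (TruncatedWittVector.coeff 1) (RingHom.congr_fun h a)
  cases D
  cases E
  congr

lemma forall_δ_map_eq_iff_wittSection_comp_eq (D : DeltaStructure p A) (E : DeltaStructure p B)
    (f : A →+* B) :
    (∀ a, E.δ (f a) = f (D.δ a)) ↔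
      E.wittSection.comp f = (truncatedWittVectorMap 2 f).comp D.wittSection :=
  ⟨fun h ↦ RingHom.ext fun a ↦ truncatedWittVector_ext_two rfl (h a),
    fun h a ↦ congrArg (TruncatedWittVector.coeff 1) (RingHom.congr_fun h a)⟩

end DeltaStructure

section FormallyEtale

variable {R S B C : Type*} [CommRing R] [CommRing S] [CommRing B] [CommRing C]

lemma existsUnique_ringHom_lift_of_formallyEtale {i : R →+* S} (hi : i.FormallyEtale) {g : B →+* C}
    (hg : Function.Surjective g) (hker : IsNilpotent (RingHom.ker g)) (h : R →+* B) (f : S →+* C)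
    (hf : f.comp i = g.comp h) :
    ∃! φ : S →+* B, g.comp φ = f ∧ φ.comp i = h := by
  algebraize [i, h, g.comp h]
  let gₐ : B →ₐ[R] C := { g with commutes' := fun _ ↦ rfl }
  let fₐ : S →ₐ[R] C := { f with commutes' := RingHom.congr_fun hf }
  let φ := Algebra.FormallySmooth.liftOfSurjective fₐ gₐ hg hker
  have hφ (s : S) : g (φ s) = f s :=
    Algebra.FormallySmooth.liftOfSurjective_apply fₐ gₐ hg hker s
  refine ⟨φ, ⟨RingHom.ext hφ, φ.comp_algebraMap⟩, fun ψ ⟨hgψ, hψ⟩ ↦ ?_⟩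
  let ψₐ : S →ₐ[R] B := { ψ with commutes' := RingHom.congr_fun hψ }
  have huniq : ψₐ = φ := Algebra.FormallyUnramified.lift_unique_of_ringHom g hker ψₐ φ <|
    RingHom.ext fun s ↦ (RingHom.congr_fun hgψ s).trans (hφ s).symm
  exact congrArg AlgHom.toRingHom huniq

lemma existsUnique_ringHom_lift_of_formallyEtale_quotientMap {i : R →+* S} {J : Ideal R}
    (hi : (Ideal.quotientMap (J.map i) i Ideal.le_comap_map).FormallyEtale) {g : B →+* C}
    (hg : Function.Surjective g) (hker : IsNilpotent (RingHom.ker g)) (h : R →+* B)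
    (hJ : J ≤ RingHom.ker h) (f : S →+* C) (hf : f.comp i = g.comp h) :
    ∃! φ : S →+* B, g.comp φ = f ∧ φ.comp i = h := by
  have hfJ : J.map i ≤ RingHom.ker f := Ideal.map_le_iff_le_comap.mpr fun r hr ↦ by
    rw [Ideal.mem_comap, RingHom.mem_ker, ← RingHom.comp_apply, hf, RingHom.comp_apply, hJ hr,
      map_zero]
  obtain ⟨φ, ⟨hgφ, hφ⟩, huniq⟩ := existsUnique_ringHom_lift_of_formallyEtale hi hg hker
    (Ideal.Quotient.lift J h hJ) (Ideal.Quotient.lift _ f hfJ) (Ideal.Quotient.ringHom_ext hf)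
  refine ⟨φ.comp (Ideal.Quotient.mk _), ⟨?_, ?_⟩, fun ψ ⟨hgψ, hψ⟩ ↦ ?_⟩
  · rw [← RingHom.comp_assoc, hgφ]
    rfl
  · exact RingHom.ext fun r ↦ RingHom.congr_fun hφ (Ideal.Quotient.mk J r)
  · have hψJ : J.map i ≤ RingHom.ker ψ :=
      Ideal.map_le_iff_le_comap.mpr fun r hr ↦ (RingHom.congr_fun hψ r).trans (hJ hr)
    rw [← huniq (Ideal.Quotient.lift _ ψ hψJ)
      ⟨Ideal.Quotient.ringHom_ext hgψ, Ideal.Quotient.ringHom_ext hψ⟩]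
    rfl

lemma DeltaStructure.existsUnique_ringHom_truncatedWittVector {p : ℕ} [hp : Fact p.Prime]
    (D : DeltaStructure p R) {I : Ideal R} (hpI : (p : R) ∈ I) {i : R →+* S} {k : ℕ}
    (hi : (Ideal.quotientMap ((I ^ (k + 1)).map i) i Ideal.le_comap_map).FormallyEtale)
    (f : S →+* C) (hf : I ^ k ≤ RingHom.ker (f.comp i)) :
    ∃! φ : S →+* TruncatedWittVector p 2 C,
      (truncatedWittVectorConstantCoeff p 1 C).comp φ = f ∧
        φ.comp i = (truncatedWittVectorMap 2 (f.comp i)).comp D.wittSection := by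
  have hpC : IsNilpotent (p : C) := ⟨k, by simpa using hf (Ideal.pow_mem_pow hpI k)⟩
  refine existsUnique_ringHom_lift_of_formallyEtale_quotientMap hi
    truncatedWittVectorConstantCoeff_surjective
    (isNilpotent_ker_truncatedWittVectorConstantCoeff hpC) _ (fun r hr ↦ ?_) f rfl
  have hr₀ : f (i r) = 0 := hf (Ideal.pow_le_pow_right k.le_succ hr)
  have hr₁ : f (i (D.δ r)) = 0 := hf (D.δ_mem_pow hp.out hpI hr)
  exact truncatedWittVector_ext_two (hr₀.trans (TruncatedWittVector.coeff_zero ..).symm)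
    (hr₁.trans (TruncatedWittVector.coeff_zero ..).symm)

end FormallyEtale

section AdicLimit

variable {S : Type*} [CommRing S]

lemma exists_forall_mk_eq_of_factorPow_eq (K : Ideal S) [IsPrecomplete K S] (x : ∀ k, S ⧸ K ^ k)
    (hx : ∀ {k l : ℕ} (hkl : k ≤ l), factorPow K hkl (x l) = x k) :
    ∃ s : S, ∀ k, Ideal.Quotient.mk (K ^ k) s = x k := by
  choose y hy using fun k ↦ Ideal.Quotient.mk_surjective (x k)
  have hmodEq (k : ℕ) (a b : S) : a ≡ b [SMOD (K ^ k • ⊤ : Ideal S)] ↔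
      Ideal.Quotient.mk (K ^ k) a = Ideal.Quotient.mk (K ^ k) b := by
    rw [smul_eq_mul, Ideal.mul_top]
    rfl
  obtain ⟨s, hs⟩ := IsPrecomplete.prec ‹IsPrecomplete K S› (f := y) fun {k l} hkl ↦ by
    rw [hmodEq, hy, ← hx hkl, ← hy l]
    rfl
  exact ⟨s, fun k ↦ ((hmodEq k _ _).mp (hs k)).symm.trans (hy k)⟩

variable {p : ℕ} [Fact p.Prime] {n : ℕ} (K : Ideal S)

lemma truncatedWittVector_eq_of_forall_map_mk_eq [IsHausdorff K S]
    {x y : TruncatedWittVector p n S}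
    (hxy : ∀ k, truncatedWittVectorMap n (Ideal.Quotient.mk (K ^ k)) x =
      truncatedWittVectorMap n (Ideal.Quotient.mk (K ^ k)) y) : x = y := by
  have hcoeff : (fun i ↦ x.coeff i) = fun i ↦ y.coeff i := IsHausdorff.funext' K fun k i ↦
    congrArg (TruncatedWittVector.coeff i) (hxy k)
  exact TruncatedWittVector.ext (congrFun hcoeff)

lemma ringHom_truncatedWittVector_eq_of_forall_map_mk_comp_eq [IsHausdorff K S] {B : Type*}
    [NonAssocSemiring B] {Φ Ψ : B →+* TruncatedWittVector p n S}
    (h : ∀ k, (truncatedWittVectorMap n (Ideal.Quotient.mk (K ^ k))).comp Φ =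
      (truncatedWittVectorMap n (Ideal.Quotient.mk (K ^ k))).comp Ψ) : Φ = Ψ :=
  RingHom.ext fun b ↦ truncatedWittVector_eq_of_forall_map_mk_eq K fun k ↦ RingHom.congr_fun (h k) b

lemma exists_forall_truncatedWittVectorMap_mk_eq [IsPrecomplete K S]
    (x : ∀ k, TruncatedWittVector p n (S ⧸ K ^ k))
    (hx : ∀ {k l : ℕ} (hkl : k ≤ l), truncatedWittVectorMap n (factorPow K hkl) (x l) = x k) :
    ∃ y : TruncatedWittVector p n S,
      ∀ k, truncatedWittVectorMap n (Ideal.Quotient.mk (K ^ k)) y = x k := by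
  choose y hy using fun i ↦ exists_forall_mk_eq_of_factorPow_eq K (fun k ↦ (x k).coeff i)
    fun hkl ↦ congrArg (TruncatedWittVector.coeff i) (hx hkl)
  exact ⟨TruncatedWittVector.mk p y, fun k ↦ TruncatedWittVector.ext fun i ↦ hy i k⟩

variable [IsAdicComplete K S]

lemma exists_forall_truncatedWittVectorMap_mk_comp_eq {B : Type*} [NonAssocSemiring B]
    (φ : ∀ k, B →+* TruncatedWittVector p n (S ⧸ K ^ k))
    (hφ : ∀ {k l : ℕ} (hkl : k ≤ l),
      (truncatedWittVectorMap n (factorPow K hkl)).comp (φ l) = φ k) :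
    ∃ Φ : B →+* TruncatedWittVector p n S,
      ∀ k, (truncatedWittVectorMap n (Ideal.Quotient.mk (K ^ k))).comp Φ = φ k := by
  choose Φ hΦ using fun b ↦ exists_forall_truncatedWittVectorMap_mk_eq K (fun k ↦ φ k b)
    fun hkl ↦ RingHom.congr_fun (hφ hkl) b
  refine ⟨{ toFun := Φ, map_zero' := ?_, map_one' := ?_, map_add' := fun x y ↦ ?_,
            map_mul' := fun x y ↦ ?_ }, fun k ↦ RingHom.ext fun b ↦ hΦ b k⟩
  all_goals
    refine truncatedWittVector_eq_of_forall_map_mk_eq K fun k ↦ ?_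
    simp only [hΦ, map_zero, map_one, map_add, map_mul]

lemma existsUnique_ringHom_truncatedWittVector_of_forall_quotient {R B : Type*} [NonAssocSemiring R]
    [NonAssocSemiring B] (i : R →+* B) (f : B →+* S) (h : R →+* TruncatedWittVector p (n + 1) S)
    (hlift : ∀ k, ∃! φ : B →+* TruncatedWittVector p (n + 1) (S ⧸ K ^ k),
      (truncatedWittVectorConstantCoeff p n (S ⧸ K ^ k)).comp φ =
          (Ideal.Quotient.mk (K ^ k)).comp f ∧
        φ.comp i = (truncatedWittVectorMap (n + 1) (Ideal.Quotient.mk (K ^ k))).comp h) :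
    ∃! Φ : B →+* TruncatedWittVector p (n + 1) S,
      (truncatedWittVectorConstantCoeff p n S).comp Φ = f ∧ Φ.comp i = h := by
  choose φ hφ huniq using hlift
  have hcompat {k l : ℕ} (hkl : k ≤ l) :
      (truncatedWittVectorMap (n + 1) (factorPow K hkl)).comp (φ l) = φ k := by
    refine huniq k _ ⟨?_, ?_⟩
    · exact congrArg (factorPow K hkl).comp (hφ l).1
    · rw [RingHom.comp_assoc, (hφ l).2]
      rfl
  obtain ⟨Φ, hΦ⟩ := exists_forall_truncatedWittVectorMap_mk_comp_eq K φ hcompat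
  refine ⟨Φ, ⟨?_, ?_⟩, fun Ψ ⟨hΨf, hΨi⟩ ↦ ?_⟩
  · refine DFunLike.coe_injective <| IsHausdorff.funext' K fun k b ↦ ?_
    rw [← RingHom.comp_apply _ f, ← (hφ k).1, ← hΦ k]
    rfl
  · refine ringHom_truncatedWittVector_eq_of_forall_map_mk_comp_eq K fun k ↦ ?_
    rw [← RingHom.comp_assoc, hΦ, (hφ k).2]
  · refine ringHom_truncatedWittVector_eq_of_forall_map_mk_comp_eq K fun k ↦ ?_
    rw [hΦ k]
    refine huniq k _ ⟨congrArg (Ideal.Quotient.mk (K ^ k)).comp hΨf, ?_⟩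
    rw [RingHom.comp_assoc, hΨi]

end AdicLimit

theorem unique_delta_structure_of_etale_general (p : ℕ) (hp : p.Prime)
    (R S : Type*) [CommRing R] [CommRing S] [Algebra R S]
    (DR : DeltaStructure p R) (I : Ideal R) (hpI : (p : R) ∈ I)
    (hcomplete : IsAdicComplete I S)
    (hformallyEtale : ∀ n : ℕ, 0 < n →
      (Ideal.quotientMap ((I ^ n).map (algebraMap R S)) (algebraMap R S)
        Ideal.le_comap_map).FormallyEtale) :
    ∃! DS : DeltaStructure p S,
      ∀ r : R, DS.δ (algebraMap R S r) = algebraMap R S (DR.δ r) := by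
  have : Fact p.Prime := ⟨hp⟩
  have : IsAdicComplete (I.map (algebraMap R S)) S :=
    (IsAdicComplete.map_algebraMap_iff _ _).mpr hcomplete
  obtain ⟨s, ⟨hs, hsR⟩, huniq⟩ := existsUnique_ringHom_truncatedWittVector_of_forall_quotient
    (I.map (algebraMap R S)) (algebraMap R S) (RingHom.id S)
    ((truncatedWittVectorMap 2 (algebraMap R S)).comp DR.wittSection) fun k ↦
      DR.existsUnique_ringHom_truncatedWittVector hpI (hformallyEtale (k + 1) k.succ_pos) _
        fun r hr ↦ Ideal.Quotient.eq_zero_iff_mem.mpr <|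
          Ideal.map_pow (algebraMap R S) I k ▸ Ideal.mem_map_of_mem _ hr
  simp only [DeltaStructure.forall_δ_map_eq_iff_wittSection_comp_eq]
  refine ⟨.ofWittSection s hs, ?_, fun E hE ↦ DeltaStructure.wittSection_injective ?_⟩
  · simpa only [DeltaStructure.wittSection_ofWittSection] using hsR
  · rw [DeltaStructure.wittSection_ofWittSection]
    exact huniq _ ⟨E.constantCoeff_comp_wittSection, hE⟩

/-- If `R` is a δ-ring, `I ⊆ R` an ideal containing `p`, and `S` an `R`-algebra which is
`I`-adically complete and separated and `I`-adically étale over `R`, then there exists a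
unique δ-structure on `S` making `R → S` a δ-homomorphism. -/
theorem unique_delta_structure_of_etale (p : ℕ) (hp : p.Prime)
    (R S : Type u) [CommRing R] [CommRing S] [Algebra R S]
    (DR : DeltaStructure p R) (I : Ideal R) (hpI : (p : R) ∈ I)
    (hcomplete : IsAdicComplete I S)
    (hetale : ∀ n : ℕ, 0 < n →
      letI : Algebra (R ⧸ I ^ n) (S ⧸ (I ^ n).map (algebraMap R S)) :=
        (Ideal.quotientMap ((I ^ n).map (algebraMap R S)) (algebraMap R S)
          Ideal.le_comap_map).toAlgebra
      Algebra.Etale (R ⧸ I ^ n) (S ⧸ (I ^ n).map (algebraMap R S))) :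
    ∃! DS : DeltaStructure p S,
      ∀ r : R, DS.δ (algebraMap R S r) = algebraMap R S (DR.δ r) :=
  unique_delta_structure_of_etale_general p hp R S DR I hpI hcomplete fun n hn ↦
    @Algebra.Etale.formallyEtale _ _ _ _ (_) (hetale n hn)
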